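/- arXiv:1208.5298 — 7 statements merged into one kernel-verified Lean document; each statement's English description precedes it below -/
import Mathlib

section
/- Let R be a commutative ring and D a subring of R which is a unique factorization domain. If there exists an irreducible element p ∈ D such that 1/p ∈ R (i.e., p is a unit of R), then R has a maximal subring. -/
/-- A ring is submaximal if it has a maximal subring. -/
def Submaximal (R : Type*) [CommRing R] : Prop :=
  ∃ S : Subring R, S ≠ ⊤ ∧ ∀ T : Subring R, S < T → T = ⊤

theorem aux_submaximal {R A : Type*} [CommRing R] [Nontrivial R] [CommRing A] [IsDomain A]
    [UniqueFactorizationMonoid A] [Algebra A R]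
    (hinj : Function.Injective (algebraMap A R)) [Algebra.IsAlgebraic A R]
    (p : A) (hp : Prime p) (hpu : IsUnit (algebraMap A R p)) : Submaximal R := by
  obtain ⟨α, hα⟩ := hpu.exists_right_inv
  -- the elements of `R` integral over the localization of `A` at `(p)`
  let S : Subring R :=
    { carrier := {r | ∃ b : A, ¬ p ∣ b ∧ IsIntegral A (algebraMap A R b * r)}
      zero_mem' := ⟨1, hp.not_dvd_one, by simpa using isIntegral_zero⟩
      one_mem' := ⟨1, hp.not_dvd_one, by simpa using isIntegral_one⟩
      add_mem' := by
        rintro x y ⟨b, hb, hx⟩ ⟨c, hc, hy⟩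
        refine ⟨b * c, fun h => (hp.dvd_or_dvd h).elim hb hc, ?_⟩
        have := ((isIntegral_algebraMap (R := A) (A := R) (x := c)).mul hx).add
          ((isIntegral_algebraMap (R := A) (A := R) (x := b)).mul hy)
        convert this using 1
        rw [map_mul]; ring
      mul_mem' := by
        rintro x y ⟨b, hb, hx⟩ ⟨c, hc, hy⟩
        refine ⟨b * c, fun h => (hp.dvd_or_dvd h).elim hb hc, ?_⟩
        convert hx.mul hy using 1
        rw [map_mul]; ring
      neg_mem' := by
        rintro x ⟨b, hb, hx⟩
        refine ⟨b, hb, ?_⟩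
        convert hx.neg using 1
        ring }
  have hαS : α ∉ S := by
    rintro ⟨b, hb, q, hq, h0⟩
    refine hb (hp.dvd_of_dvd_pow (Polynomial.dvd_pow_natDegree_of_eval₂_eq_zero hinj hq p b _ h0 ?_))
    linear_combination (algebraMap A R b) * hα
  have hS : ∀ r : R, ∃ n : ℕ, algebraMap A R p ^ n * r ∈ S := by
    intro r
    obtain ⟨a, ha, hr⟩ := (Algebra.IsAlgebraic.isAlgebraic (R := A) r).exists_integral_multiple
    obtain ⟨b, hab, hb⟩ :=
      (FiniteMultiplicity.of_prime_left hp ha).exists_eq_pow_mul_and_not_dvd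
    refine ⟨multiplicity p a, b, hb, ?_⟩
    rw [hab, Algebra.smul_def] at hr
    convert hr using 1
    rw [map_mul, map_pow]; ring
  obtain ⟨M, hSM, hM⟩ := zorn_le_nonempty₀ {T : Subring R | α ∉ T} (by
    intro c hc hchain y hy
    refine ⟨sSup c, ?_, fun z hz => le_sSup hz⟩
    intro h
    rw [Subring.mem_sSup_of_directedOn ⟨y, hy⟩ hchain.directedOn] at h
    obtain ⟨s, hs, h⟩ := h
    exact hc hs h) S hαS
  refine ⟨M, fun h => hM.prop (h ▸ Subring.mem_top α), fun T hT => ?_⟩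
  have hαT : α ∈ T := by
    by_contra h
    exact hT.not_ge (hM.le_of_ge h hT.le)
  rw [eq_top_iff]
  intro r _
  obtain ⟨n, hn⟩ := hS r
  have := T.mul_mem (T.pow_mem hαT n) (hT.le (hSM hn))
  rwa [← mul_assoc, ← mul_pow, mul_comm α, hα, one_pow, one_mul] at this

theorem stmt2 {R : Type*} [CommRing R] [Nontrivial R] (D : Subring R)
    [IsDomain D] [UniqueFactorizationMonoid D]
    (p : D) (hp : Irreducible p) (hpu : IsUnit (p : R)) :
    Submaximal R := by
  have : FaithfulSMul D R :=
    (faithfulSMul_iff_algebraMap_injective D R).mpr Subtype.val_injective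
  obtain ⟨s, hs⟩ := exists_isTranscendenceBasis D R
  have hp' : Prime p := hp.prime
  let e := hs.1.aevalEquiv
  have : IsDomain (Algebra.adjoin D (Set.range ((↑) : s → R))) := e.symm.toMulEquiv.isDomain _
  have : UniqueFactorizationMonoid (Algebra.adjoin D (Set.range ((↑) : s → R))) :=
    e.toMulEquiv.uniqueFactorizationMonoid inferInstance
  have := hs.isAlgebraic
  refine aux_submaximal (A := Algebra.adjoin D (Set.range ((↑) : s → R))) Subtype.val_injective
    (algebraMap D _ p) ?_ hpu
  have h1 : Prime (MvPolynomial.C p : MvPolynomial s D) := (MvPolynomial.prime_C_iff _).mpr hp'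
  have h2 := (MulEquiv.prime_iff e).mpr h1
  rwa [← MvPolynomial.algebraMap_eq, e.commutes] at h2
end

section
/- Let R be a commutative ring whose characteristic is a nonzero square-free integer. Then either R has a maximal subring or the group of units U(R) is a torsion group. -/
theorem submax_of_witness {R : Type*} [CommRing R] (T : Subring R) (u v : R) (huv : u * v = 1)
    (hv : v ∉ T) (h : ∀ y : R, ∃ k : ℕ, u ^ k * y ∈ T) : Submaximal R := by
  obtain ⟨M, hTM, hM⟩ := zorn_le_nonempty₀ {S : Subring R | v ∉ S} (by
    intro c hc hchain y hy
    refine ⟨sSup c, ?_, fun z hz => le_sSup hz⟩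
    intro hmem
    rw [Subring.mem_sSup_of_directedOn ⟨y, hy⟩ hchain.directedOn] at hmem
    obtain ⟨s, hs, hvs⟩ := hmem
    exact hc hs hvs) T hv
  refine ⟨M, ?_, ?_⟩
  · rintro rfl
    exact hM.prop (Subring.mem_top v)
  · intro S hS
    have hvS : v ∈ S := by
      by_contra hcon
      exact hS.not_ge (hM.le_of_ge hcon hS.le)
    rw [eq_top_iff]
    intro y _
    obtain ⟨k, hk⟩ := h y
    have : y = v ^ k * (u ^ k * y) := by
      rw [← mul_assoc, ← mul_pow, mul_comm v u, huv, one_pow, one_mul]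
    rw [this]
    exact S.mul_mem (S.pow_mem hvS k) (hS.le (hTM hk))

theorem witness_of_algebraic {A D : Type*} [CommRing A] [IsDomain A] [WfDvdMonoid A]
    [CommRing D] [Algebra A D] (hinj : Function.Injective (algebraMap A D))
    [Algebra.IsAlgebraic A D] (q : A) (hq : Prime q) (v : D) (hv : algebraMap A D q * v = 1) :
    ∃ T : Subring D, v ∉ T ∧ ∀ y : D, ∃ k : ℕ, (algebraMap A D q) ^ k * y ∈ T := by
  let T : Subring D :=
    { carrier := {y | ∃ s : A, ¬ q ∣ s ∧ IsIntegral A (algebraMap A D s * y)}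
      one_mem' := ⟨1, hq.not_dvd_one, by simpa using isIntegral_one⟩
      zero_mem' := ⟨1, hq.not_dvd_one, by simpa using isIntegral_zero⟩
      mul_mem' := by
        rintro a b ⟨s, hs, hs'⟩ ⟨t, ht, ht'⟩
        refine ⟨s * t, fun h => (hq.dvd_or_dvd h).elim hs ht, ?_⟩
        have := hs'.mul ht'
        rw [map_mul]
        convert this using 1
        ring
      add_mem' := by
        rintro a b ⟨s, hs, hs'⟩ ⟨t, ht, ht'⟩
        refine ⟨s * t, fun h => (hq.dvd_or_dvd h).elim hs ht, ?_⟩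
        have := ((isIntegral_algebraMap (R := A) (A := D) (x := t)).mul hs').add
          ((isIntegral_algebraMap (R := A) (A := D) (x := s)).mul ht')
        rw [map_mul]
        convert this using 1
        ring
      neg_mem' := by
        rintro a ⟨s, hs, hs'⟩
        exact ⟨s, hs, by simpa using hs'.neg⟩ }
  refine ⟨T, ?_, ?_⟩
  · rintro ⟨s, hs, f, hf, hf0⟩
    have h1 := Polynomial.scaleRoots_eval₂_eq_zero (algebraMap A D) (s := q) hf0
    have e : algebraMap A D q * (algebraMap A D s * v) = algebraMap A D s := by
      rw [mul_left_comm, hv, mul_one]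
    rw [e, Polynomial.eval₂_at_apply] at h1
    have h2 : Polynomial.eval s (f.scaleRoots q) = 0 := hinj (by rw [h1, map_zero])
    rw [Polynomial.eval_eq_sum_range, Polynomial.natDegree_scaleRoots,
      Finset.sum_range_succ] at h2
    have h3 : q ∣ ∑ i ∈ Finset.range f.natDegree, (f.scaleRoots q).coeff i * s ^ i := by
      refine Finset.dvd_sum fun i hi => ?_
      rw [Polynomial.coeff_scaleRoots]
      have : f.natDegree - i ≠ 0 := by
        have := Finset.mem_range.1 hi
        omega
      exact ((dvd_pow_self q this).mul_left _).mul_right _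
    have h4 : (f.scaleRoots q).coeff f.natDegree = 1 := by
      rw [Polynomial.coeff_scaleRoots, hf.coeff_natDegree]; simp
    rw [h4, one_mul] at h2
    have h5 : q ∣ s ^ f.natDegree := by
      rw [eq_neg_of_add_eq_zero_right h2]
      exact h3.neg_right
    exact hs (hq.dvd_of_dvd_pow h5)
  · intro y
    obtain ⟨a, ha, hint⟩ := (Algebra.IsAlgebraic.isAlgebraic (R := A) y).exists_integral_multiple
    obtain ⟨c, hc, hc'⟩ :=
      (FiniteMultiplicity.of_not_isUnit hq.not_isUnit ha).exists_eq_pow_mul_and_not_dvd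
    refine ⟨multiplicity q a, c, hc', ?_⟩
    rw [Algebra.smul_def, hc, map_mul, map_pow] at hint
    convert hint using 1
    ring

theorem witness_of_transcendental {F D : Type*} [Field F] [CommRing D] [IsDomain D] [Algebra F D]
    (u v : D) (huv : u * v = 1) (hu : Transcendental F u) :
    ∃ T : Subring D, v ∉ T ∧ ∀ y : D, ∃ k : ℕ, u ^ k * y ∈ T := by
  have hs : AlgebraicIndepOn F id ({u} : Set D) := by
    have := (algebraicIndependent_unique_type_iff (R := F)
      (x := fun i : ({u} : Set D) => id i.1)).2 hu
    exact this
  obtain ⟨t, hut, ht⟩ := exists_isTranscendenceBasis_superset hs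
  have hind := ht.1
  let e := hind.aevalEquiv
  let i : t := ⟨u, hut rfl⟩
  let A := Algebra.adjoin F (Set.range ((↑) : t → D))
  haveI : UniqueFactorizationMonoid A := e.toMulEquiv.uniqueFactorizationMonoid inferInstance
  haveI : Algebra.IsAlgebraic A D := ht.isAlgebraic
  have hq : Prime (e (MvPolynomial.X i)) :=
    (MulEquiv.prime_iff e.toMulEquiv).2 MvPolynomial.X_prime
  have hqu : algebraMap A D (e (MvPolynomial.X i)) = u := by
    simp [e, A, i]
  have := witness_of_algebraic (A := A) (D := D) Subtype.val_injective _ hq v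
    (by rw [hqu, huv])
  rwa [hqu] at this

theorem pow_eq_one_of_algebraic {F S : Type*} [Field F] [Finite F] [CommRing S] [Algebra F S]
    (u v : S) (huv : u * v = 1) (hu : IsAlgebraic F u) : ∃ m : ℕ, 0 < m ∧ u ^ m = 1 := by
  have hint : IsIntegral F u := hu.isIntegral
  haveI : Module.Finite F (Algebra.adjoin F {u}) :=
    Module.Finite.iff_fg.2 hint.fg_adjoin_singleton
  haveI : Finite (Algebra.adjoin F {u}) := Module.finite_of_finite F
  let w : Algebra.adjoin F {u} := ⟨u, Algebra.self_mem_adjoin_singleton F u⟩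
  obtain ⟨a, b, hab, h⟩ := Finite.exists_ne_map_eq_of_infinite (fun k : ℕ => w ^ k)
  have key : ∀ a b : ℕ, a < b → w ^ a = w ^ b → ∃ m : ℕ, 0 < m ∧ u ^ m = 1 := by
    intro a b hlt h
    refine ⟨b - a, by omega, ?_⟩
    have h' : u ^ a = u ^ b := congrArg Subtype.val h
    have hone : v ^ a * u ^ a = 1 := by rw [← mul_pow, mul_comm v u, huv, one_pow]
    calc u ^ (b - a) = v ^ a * u ^ a * u ^ (b - a) := by rw [hone, one_mul]
      _ = v ^ a * u ^ b := by rw [mul_assoc, ← pow_add]; congr 2; omega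
      _ = 1 := by rw [← h', hone]
  rcases hab.lt_or_gt with hlt | hlt
  · exact key a b hlt h
  · exact key b a hlt h.symm

theorem exists_prime_transcendental {F S : Type*} [Field F] [CommRing S] [Algebra F S]
    (u : S) (hu : Transcendental F u) :
    ∃ Q : Ideal S, Q.IsPrime ∧ Transcendental F (Ideal.Quotient.mk Q u) := by
  let M : Submonoid S := (nonZeroDivisors (Polynomial F)).map (Polynomial.aeval (R := F) u)
  obtain ⟨Q, hQ, -, hdis⟩ := Ideal.exists_le_prime_disjoint (⊥ : Ideal S) M (by
    rw [Set.disjoint_left]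
    rintro x hx ⟨f, hf, hfx⟩
    have hx0 : x = 0 := hx
    rw [hx0] at hfx
    exact hu ⟨f, nonZeroDivisors.ne_zero hf, hfx⟩)
  refine ⟨Q, hQ, ?_⟩
  rintro ⟨f, hf, hf0⟩
  have : Polynomial.aeval u f ∈ Q := by
    rw [← Ideal.Quotient.eq_zero_iff_mem, ← hf0]
    exact (Polynomial.aeval_algHom_apply (Ideal.Quotient.mkₐ F Q) u f).symm
  exact Set.disjoint_left.1 hdis this ⟨f, mem_nonZeroDivisors_of_ne_zero hf, rfl⟩

theorem stmt8 {R : Type*} [CommRing R] (n : ℕ) (hn : n ≠ 0) (hsq : Squarefree n)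
    [CharP R n] :
    Submaximal R ∨ ∀ u : Rˣ, IsOfFinOrder u := by
  by_cases htor : ∀ u : Rˣ, IsOfFinOrder u
  · exact Or.inr htor
  left
  push Not at htor
  obtain ⟨u, hu⟩ := htor
  -- some prime divisor modulo which the unit has infinite order
  have hp : ∃ p ∈ n.primeFactors, ∀ m : ℕ, 0 < m → ¬ (p : R) ∣ (u : R) ^ m - 1 := by
    by_contra hcon
    push Not at hcon
    choose! m hm0 hm using hcon
    apply hu
    rw [isOfFinOrder_iff_pow_eq_one]
    refine ⟨∏ p ∈ n.primeFactors, m p, Finset.prod_pos hm0, ?_⟩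
    have hdvd : (∏ p ∈ n.primeFactors, (p : R)) ∣
        (u : R) ^ (∏ p ∈ n.primeFactors, m p) - 1 := by
      apply Finset.prod_dvd_of_coprime
      · intro p hp q hq hpq
        have : Nat.Coprime p q := (Nat.coprime_primes (Nat.prime_of_mem_primeFactors hp)
          (Nat.prime_of_mem_primeFactors hq)).2 hpq
        exact this.cast
      · intro p hp
        refine (hm p hp).trans ?_
        obtain ⟨c, hc⟩ := Finset.dvd_prod_of_mem m hp
        rw [hc, pow_mul]
        exact sub_one_dvd_pow_sub_one _ _
    rw [← Nat.cast_prod, Nat.prod_primeFactors_of_squarefree hsq, CharP.cast_eq_zero,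
      zero_dvd_iff, sub_eq_zero] at hdvd
    exact Units.ext (by simpa using hdvd)
  obtain ⟨p, hpn, hp⟩ := hp
  haveI : Fact p.Prime := ⟨Nat.prime_of_mem_primeFactors hpn⟩
  let I : Ideal R := Ideal.span {(p : R)}
  let S := R ⧸ I
  haveI : Nontrivial S := Ideal.Quotient.nontrivial_iff.2 (by
    intro h
    have h1 : (1 : R) ∈ I := h ▸ Submodule.mem_top
    exact hp 1 one_pos ((Ideal.mem_span_singleton.1 h1).trans (one_dvd _)))
  have hp0 : (p : S) = 0 := by
    have : Ideal.Quotient.mk I (p : R) = 0 :=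
      Ideal.Quotient.eq_zero_iff_mem.2 (Ideal.mem_span_singleton_self _)
    simpa using this
  haveI : CharP S p := (CharP.charP_iff_prime_eq_zero Fact.out).2 hp0
  letI : Algebra (ZMod p) S := ZMod.algebra S p
  let π : R →+* S := Ideal.Quotient.mk I
  have huv : (u : R) * (↑u⁻¹ : R) = 1 := by simp
  have htr : Transcendental (ZMod p) (π u) := by
    intro halg
    obtain ⟨m, hm, h⟩ := pow_eq_one_of_algebraic (F := ZMod p) (π u) (π ↑u⁻¹)
      (by rw [← map_mul, huv, map_one]) halg
    apply hp m hm
    rw [← Ideal.mem_span_singleton, ← Ideal.Quotient.eq_zero_iff_mem]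
    change π _ = 0
    rw [map_sub, map_pow, h, map_one, sub_self]
  obtain ⟨Q, hQ, htrQ⟩ := exists_prime_transcendental (π u) htr
  let ψ : R →+* S ⧸ Q := (Ideal.Quotient.mk Q).comp π
  obtain ⟨T, hvT, hT⟩ := witness_of_transcendental (F := ZMod p) (ψ u) (ψ ↑u⁻¹)
    (by rw [← map_mul, huv, map_one]) htrQ
  refine submax_of_witness (T.comap ψ) u (↑u⁻¹ : R) huv hvT ?_
  intro y
  obtain ⟨k, hk⟩ := hT (ψ y)
  exact ⟨k, by simpa [Subring.mem_comap] using hk⟩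
end

section
/- Let R be a von Neumann regular commutative ring. Then either R has a maximal subring or R is periodic, i.e., for every x ∈ R there exists a natural number n ≥ 1 with x^{n+1} = x (equivalently, x^n = x^{2n} for some n ≥ 1). -/
open Polynomial

theorem Submaximal.of_surjective {R S : Type*} [CommRing R] [CommRing S] (f : R →+* S)
    (hf : Function.Surjective f) (h : Submaximal S) : Submaximal R := by
  obtain ⟨A, hA, hmax⟩ := h
  refine ⟨A.comap f, ?_, ?_⟩
  · intro h
    apply hA
    rw [eq_top_iff]
    intro s _
    obtain ⟨r, rfl⟩ := hf s
    have : r ∈ A.comap f := by rw [h]; trivial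
    exact this
  · intro T hT
    have h1 : A < T.map f := by
      obtain ⟨t, htT, htA⟩ := SetLike.exists_of_lt hT
      refine lt_of_le_of_ne ?_ ?_
      · intro s hs
        obtain ⟨r, rfl⟩ := hf s
        exact ⟨r, hT.le hs, rfl⟩
      · intro h
        apply htA
        change f t ∈ A
        rw [h]
        exact ⟨t, htT, rfl⟩
    have h2 := hmax _ h1
    rw [eq_top_iff]
    intro r _
    have : f r ∈ T.map f := by rw [h2]; trivial
    obtain ⟨t, ht, htr⟩ := this
    have h3 : r - t ∈ A.comap f := by
      change f (r - t) ∈ A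
      rw [map_sub, htr, sub_self]
      exact A.zero_mem
    have := T.add_mem (hT.le h3) ht
    simpa using this

theorem submaximal_of_adjoin {R : Type*} [CommRing R] (A : Subring R) (y : R) (hy : y ∉ A)
    (hgen : ∀ T : Subring R, A ≤ T → y ∈ T → T = ⊤) : Submaximal R := by
  obtain ⟨M, hAM, hM⟩ := zorn_le_nonempty₀ {T : Subring R | A ≤ T ∧ y ∉ T} (by
    intro c hc hchain B hB
    refine ⟨sSup c, ⟨?_, ?_⟩, fun z hz => le_sSup hz⟩
    · exact (hc hB).1.trans (le_sSup hB)
    · intro hmem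
      rw [Subring.mem_sSup_of_directedOn ⟨B, hB⟩ hchain.directedOn] at hmem
      obtain ⟨s, hs, hys⟩ := hmem
      exact (hc hs).2 hys) A ⟨le_rfl, hy⟩
  refine ⟨M, ?_, ?_⟩
  · intro h
    apply hM.prop.2
    rw [h]; trivial
  · intro T hT
    apply hgen T (hM.prop.1.trans hT.le)
    by_contra hyT
    exact hT.not_ge (hM.le_of_ge ⟨hM.prop.1.trans hT.le, hyT⟩ hT.le)

theorem submaximal_of_dvr (D E : Type*) [CommRing D] [IsDomain D] [IsDiscreteValuationRing D]
    [Field E] [Algebra D E] [FaithfulSMul D E] [Algebra.IsAlgebraic D E] : Submaximal E := by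
  obtain ⟨π, hπ⟩ := IsDiscreteValuationRing.exists_irreducible D
  have hinj := FaithfulSMul.algebraMap_injective D E
  have hπ0 : algebraMap D E π ≠ 0 := by
    rw [Ne, map_eq_zero_iff _ hinj]; exact hπ.ne_zero
  refine submaximal_of_adjoin (integralClosure D E).toSubring (algebraMap D E π)⁻¹ ?_ ?_
  · intro h
    have h' : IsIntegral D (algebraMap D E π)⁻¹ := h
    have : FaithfulSMul D (integralClosure D E) := by
      rw [faithfulSMul_iff_algebraMap_injective]
      intro a b hab
      exact hinj (congrArg (fun z : integralClosure D E => (z : E)) hab)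
    have hu : IsUnit (algebraMap D (integralClosure D E) π) := by
      refine IsUnit.of_mul_eq_one ⟨_, h'⟩ ?_
      apply Subtype.ext
      exact mul_inv_cancel₀ hπ0
    exact hπ.not_isUnit (isUnit_of_map_unit _ _ hu)
  · intro T hT hy
    rw [eq_top_iff]
    intro e _
    obtain ⟨d, hd, hint⟩ := (Algebra.IsAlgebraic.isAlgebraic (R := D) e).exists_integral_multiple
    obtain ⟨n, u, rfl⟩ := IsDiscreteValuationRing.eq_unit_mul_pow_irreducible hd hπ
    have h1 : ((u : D) * π ^ n) • e ∈ T := hT hint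
    have h2 : algebraMap D E (↑u⁻¹ : D) ∈ T := hT (isIntegral_algebraMap (R := D))
    have h3 := T.mul_mem (T.mul_mem h2 h1) (T.pow_mem hy n)
    have h4 : algebraMap D E (↑u⁻¹ : D) * algebraMap D E (u : D) = 1 := by
      rw [← map_mul]; simp
    convert h3
    rw [Algebra.smul_def, map_mul, map_pow]
    calc e = (algebraMap D E (↑u⁻¹ : D) * algebraMap D E (u : D)) * e *
          (algebraMap D E π * (algebraMap D E π)⁻¹) ^ n := by
            rw [h4, mul_inv_cancel₀ hπ0]; simp
      _ = _ := by rw [mul_pow]; ring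

theorem submaximal_of_dedekind (D E : Type*) [CommRing D] [IsDedekindDomain D]
    (hD : ¬ IsField D)
    [Field E] [Algebra D E] [FaithfulSMul D E] [Algebra.IsAlgebraic D E] : Submaximal E := by
  obtain ⟨P, hP0, hP⟩ := Ring.not_isField_iff_exists_prime.mp hD
  have := IsLocalization.AtPrime.isDiscreteValuationRing_of_dedekind_domain D hP0
    (Localization.AtPrime P)
  have hinj := FaithfulSMul.algebraMap_injective D E
  have hu : ∀ y : P.primeCompl, IsUnit (algebraMap D E y) := by
    intro y
    rw [isUnit_iff_ne_zero, Ne, map_eq_zero_iff _ hinj]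
    intro h
    apply y.2
    rw [h]; exact P.zero_mem
  let f : Localization.AtPrime P →+* E := IsLocalization.lift hu
  letI : Algebra (Localization.AtPrime P) E := f.toAlgebra
  haveI : IsScalarTower D (Localization.AtPrime P) E := IsScalarTower.of_algebraMap_eq (by
    intro x
    exact (IsLocalization.lift_eq hu x).symm)
  haveI : FaithfulSMul (Localization.AtPrime P) E := by
    rw [faithfulSMul_iff_algebraMap_injective]
    refine (IsLocalization.lift_injective_iff hu).2 ?_
    intro x y
    rw [hinj.eq_iff, (IsLocalization.injective (Localization.AtPrime P)
      P.primeCompl_le_nonZeroDivisors).eq_iff]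
  haveI : Algebra.IsAlgebraic (Localization.AtPrime P) E :=
    Algebra.IsAlgebraic.extendScalars (R := D)
      (IsLocalization.injective (Localization.AtPrime P) P.primeCompl_le_nonZeroDivisors)
  exact submaximal_of_dvr (Localization.AtPrime P) E

theorem submaximal_of_transcendental (F E : Type*) [Field F] [Field E] [Algebra F E] (x : E)
    (hx : Transcendental F x) : Submaximal E := by
  have hs : AlgebraicIndepOn F id ({x} : Set E) := by
    refine (algebraicIndependent_unique_type_iff (ι := ({x} : Set E))).2 ?_
    exact hx
  obtain ⟨B, hB, hbasis⟩ := exists_isTranscendenceBasis_superset hs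
  have hxB : x ∈ B := hB rfl
  let K := IntermediateField.adjoin F (B \ {x})
  have hK : Transcendental K x := by
    rw [IntermediateField.transcendental_adjoin_iff]
    have := hbasis.1.transcendental_adjoin (s := {⟨x, hxB⟩}ᶜ) (i := ⟨x, hxB⟩) (by simp)
    have h2 : (Subtype.val : B → E) '' {⟨x, hxB⟩}ᶜ = B \ {x} := by
      ext y; simp
    rw [h2] at this
    exact this
  letI : Algebra K[X] E := (aeval (R := K) x).toRingHom.toAlgebra
  have hmap : ∀ p : K[X], algebraMap K[X] E p = aeval x p := fun _ => rfl
  haveI : IsScalarTower F K[X] E := IsScalarTower.of_algebraMap_eq (by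
    intro r
    rw [hmap, IsScalarTower.algebraMap_apply F K K[X], AlgHom.commutes,
      ← IsScalarTower.algebraMap_apply])
  haveI : FaithfulSMul K[X] E := by
    rw [faithfulSMul_iff_algebraMap_injective]
    exact transcendental_iff_injective.1 hK
  haveI : Algebra.IsAlgebraic K[X] E := by
    rw [hbasis.isAlgebraic_iff]
    rintro ⟨b, hb⟩
    by_cases hbx : b = x
    · have : b = algebraMap K[X] E X := by rw [hmap, aeval_X, hbx]
      simp only [this]
      exact isAlgebraic_algebraMap _
    · have hbK : b ∈ K := IntermediateField.subset_adjoin F _ ⟨hb, hbx⟩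
      have : b = algebraMap K[X] E (C ⟨b, hbK⟩) := by rw [hmap, aeval_C]; rfl
      simp only
      rw [this]
      exact isAlgebraic_algebraMap _
  exact submaximal_of_dedekind K[X] E (Polynomial.not_isField K)

theorem field_case (E : Type*) [Field E] (x : E) (hx : ∀ n : ℕ, 1 ≤ n → x ^ (n + 1) ≠ x) :
    Submaximal E := by
  obtain ⟨p, hp⟩ := CharP.exists E
  rcases CharP.char_is_prime_or_zero E p with hprime | rfl
  · haveI : Fact p.Prime := ⟨hprime⟩
    letI : Algebra (ZMod p) E := ZMod.algebra E p
    refine submaximal_of_transcendental (ZMod p) E x ?_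
    intro halg
    have hint : IsIntegral (ZMod p) x := halg.isIntegral
    haveI := IntermediateField.adjoin.finiteDimensional hint
    haveI : Finite (IntermediateField.adjoin (ZMod p) {x}) := Module.finite_of_finite (ZMod p)
    letI := Fintype.ofFinite (IntermediateField.adjoin (ZMod p) {x})
    have h1 := FiniteField.pow_card (IntermediateField.AdjoinSimple.gen (ZMod p) x)
    have h2 := Fintype.one_lt_card (α := IntermediateField.adjoin (ZMod p) {x})
    have h3 := congrArg (algebraMap _ E) h1
    rw [map_pow, IntermediateField.AdjoinSimple.algebraMap_gen] at h3
    apply hx (Fintype.card (IntermediateField.adjoin (ZMod p) {x}) - 1) (by omega)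
    rw [Nat.sub_add_cancel h2.le]
    exact h3
  · haveI : CharZero E := CharP.charP_to_charZero E
    by_cases h : Algebra.IsAlgebraic ℚ E
    · haveI : Algebra.IsAlgebraic ℤ E := (IsFractionRing.comap_isAlgebraic_iff (A := ℤ) (K := ℚ)).2 h
      exact submaximal_of_dedekind ℤ E Int.not_isField
    · rw [Algebra.isAlgebraic_def, not_forall] at h
      obtain ⟨y, hy⟩ := h
      exact submaximal_of_transcendental ℚ E y hy

theorem stmt9 {R : Type*} [CommRing R] [Nontrivial R]
    (hvnr : ∀ x : R, ∃ y : R, x = x ^ 2 * y) :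
    Submaximal R ∨ ∀ x : R, ∃ n : ℕ, 1 ≤ n ∧ x ^ (n + 1) = x := by
  by_cases hsub : Submaximal R
  · exact Or.inl hsub
  refine Or.inr fun x => ?_
  -- the divisor-closed multiplicative set generated by the `x ^ (n + 1) - x`
  let S : Submonoid R :=
    { carrier := {r | ∃ N k : ℕ, 1 ≤ N ∧ r ∣ (x ^ (N + 1) - x) ^ k}
      one_mem' := ⟨1, 0, le_rfl, by simp⟩
      mul_mem' := by
        rintro a b ⟨N, k, hN, ha⟩ ⟨M, l, hM, hb⟩
        have key : ∀ N M : ℕ, x ^ (N + 1) - x ∣ x ^ (N * M + 1) - x := by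
          intro N M
          have : x ^ N - 1 ∣ x ^ (N * M) - 1 := by
            rw [pow_mul]
            simpa using sub_dvd_pow_sub_pow (x ^ N) 1 M
          have h := mul_dvd_mul_left x this
          have e : ∀ j : ℕ, x * (x ^ j - 1) = x ^ (j + 1) - x := fun j => by ring
          rwa [e, e] at h
        refine ⟨N * M, k + l, Nat.mul_pos hN hM, ?_⟩
        rw [pow_add]
        refine mul_dvd_mul (ha.trans (pow_dvd_pow_of_dvd (key N M) k))
          (hb.trans (pow_dvd_pow_of_dvd ?_ l))
        rw [mul_comm]
        exact key M N }
  have hred : ∀ (k : ℕ) (r : R), r ^ k = 0 → r = 0 := by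
    intro k r hr
    haveI : IsReduced R := by
      rw [isReduced_iff_pow_one_lt 2 one_lt_two]
      intro z hz
      obtain ⟨y, hy⟩ := hvnr z
      rw [hy, hz, zero_mul]
    exact eq_zero_of_pow_eq_zero hr
  by_cases h0 : (0 : R) ∈ S
  · obtain ⟨N, k, hN, h⟩ := h0
    exact ⟨N, hN, sub_eq_zero.1 (hred k _ (zero_dvd_iff.1 h))⟩
  exfalso
  obtain ⟨P, hP, -, hdisj⟩ := Ideal.exists_le_prime_disjoint (⊥ : Ideal R) S (by
    rw [Set.disjoint_left]
    intro a ha haS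
    have : a = 0 := ha
    exact h0 (this ▸ haS))
  have hmax : IsField (R ⧸ P) := by
    refine ⟨⟨0, 1, zero_ne_one⟩, mul_comm, ?_⟩
    intro a ha
    obtain ⟨r, rfl⟩ := Ideal.Quotient.mk_surjective a
    obtain ⟨y, hy⟩ := hvnr r
    refine ⟨Ideal.Quotient.mk P y, ?_⟩
    have h := congrArg (Ideal.Quotient.mk P) hy
    rw [map_mul, map_pow] at h
    apply mul_left_cancel₀ ha
    rw [mul_one, ← mul_assoc, ← pow_two]
    exact h.symm
  letI : Field (R ⧸ P) := hmax.toField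
  apply hsub
  refine Submaximal.of_surjective (Ideal.Quotient.mk P) Ideal.Quotient.mk_surjective ?_
  refine field_case (R ⧸ P) (Ideal.Quotient.mk P x) ?_
  intro n hn heq
  have hmem : x ^ (n + 1) - x ∈ P := by
    rw [← Ideal.Quotient.eq, map_pow]
    exact heq
  exact Set.disjoint_left.1 hdisj hmem ⟨n, 1, hn, by rw [pow_one]⟩
end

section
/- Let R be a reduced commutative ring with J(R) ≠ 0. Then R has a maximal subring. -/
theorem submax_of_surj {R R' : Type*} [CommRing R] [CommRing R'] (f : R →+* R')
    (hf : Function.Surjective f) (h : Submaximal R') : Submaximal R := by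
  obtain ⟨S, hS, hmax⟩ := h
  refine ⟨S.comap f, ?_, ?_⟩
  · intro h
    apply hS
    rw [eq_top_iff]
    intro y _
    obtain ⟨x, rfl⟩ := hf y
    have : x ∈ S.comap f := h ▸ Subring.mem_top x
    exact this
  · intro T hT
    have h1 : S < T.map f := by
      refine lt_of_le_of_ne ?_ ?_
      · intro y hy
        obtain ⟨x, rfl⟩ := hf y
        exact ⟨x, hT.le hy, rfl⟩
      · intro h
        apply hT.not_ge
        intro t ht
        change f t ∈ S
        rw [h]
        exact ⟨t, ht, rfl⟩
    have h2 := hmax _ h1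
    rw [eq_top_iff]
    intro r _
    have : f r ∈ T.map f := h2 ▸ Subring.mem_top _
    obtain ⟨t, ht, e⟩ := this
    have h3 : r - t ∈ T := hT.le (by
      change f (r - t) ∈ S
      rw [map_sub, e, sub_self]
      exact S.zero_mem)
    simpa using T.add_mem h3 ht

theorem submax_of_gen {R : Type*} [CommRing R] (S : Subring R) (w : R) (hw : w ∉ S)
    (hgen : ∀ T : Subring R, S ≤ T → w ∈ T → T = ⊤) : Submaximal R := by
  obtain ⟨M, hSM, hM⟩ := zorn_le_nonempty₀ {T : Subring R | S ≤ T ∧ w ∉ T} (by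
    intro c hc hchain y hy
    refine ⟨sSup c, ⟨(hc hy).1.trans (le_sSup hy), ?_⟩, fun z hz => le_sSup hz⟩
    rw [Subring.mem_sSup_of_directedOn ⟨y, hy⟩ hchain.directedOn]
    rintro ⟨s, hs, hws⟩
    exact (hc hs).2 hws) S ⟨le_rfl, hw⟩
  refine ⟨M, ?_, ?_⟩
  · intro h
    exact hM.1.2 (h ▸ Subring.mem_top w)
  · intro T hT
    apply hgen T (hSM.trans hT.le)
    by_contra hwT
    exact hT.not_ge (hM.2 ⟨hSM.trans hT.le, hwT⟩ hT.le)

theorem submax_of_prime {A R : Type*} [CommRing A] [IsDomain A] [UniqueFactorizationMonoid A]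
    [CommRing R] [IsDomain R] [Algebra A R] (hinj : Function.Injective (algebraMap A R))
    [Algebra.IsAlgebraic A R] (π : A) (hπ : Prime π) (hu : IsUnit (algebraMap A R π)) :
    Submaximal R := by
  let K := FractionRing R
  let P : Ideal A := Ideal.span {π}
  have hP : P.IsPrime := (Ideal.span_singleton_prime hπ.ne_zero).2 hπ
  let g : A →+* K := (algebraMap R K).comp (algebraMap A R)
  have hg : Function.Injective g := (IsFractionRing.injective R K).comp hinj
  have hunit : ∀ y : P.primeCompl, IsUnit (g y) := by
    intro y
    rw [isUnit_iff_ne_zero, Ne, map_eq_zero_iff g hg]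
    intro h
    exact y.2 (h ▸ P.zero_mem)
  let f : Localization.AtPrime P →+* K := IsLocalization.lift (M := P.primeCompl) hunit
  have hf : ∀ a, f (algebraMap A _ a) = g a := fun a => IsLocalization.lift_eq hunit a
  obtain ⟨V, hV, hloc⟩ := IsLocalRing.exists_factor_valuationRing f
  have hgV : ∀ a, g a ∈ V := fun a => hf a ▸ hV _
  have hnd : ∀ d, ¬ π ∣ d → (g d)⁻¹ ∈ V := by
    intro d hd
    have h1 : IsUnit (algebraMap A (Localization.AtPrime P) d) :=
      IsLocalization.map_units (M := P.primeCompl) _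
        ⟨d, fun h => hd (Ideal.mem_span_singleton.1 h)⟩
    obtain ⟨e, he⟩ := h1.exists_right_inv
    have h2 : g d * f e = 1 := by rw [← hf, ← map_mul, he, map_one]
    rw [← eq_inv_of_mul_eq_one_right h2]
    exact hV e
  obtain ⟨w, hw⟩ := hu.exists_right_inv
  have hwK : g π * algebraMap R K w = 1 := by
    change algebraMap R K (algebraMap A R π) * _ = 1
    rw [← map_mul, hw, map_one]
  refine submax_of_gen (V.toSubring.comap (algebraMap R K)) w ?_ ?_
  · intro hwV
    have h1 : IsUnit (f.codRestrict V.toSubring hV (algebraMap A _ π)) := by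
      refine IsUnit.of_mul_eq_one ⟨algebraMap R K w, hwV⟩ (Subtype.ext ?_)
      change f _ * _ = 1
      rw [hf, hwK]
    have h2 := hloc.map_nonunit _ h1
    have h3 := (IsLocalization.AtPrime.isUnit_to_map_iff (Localization.AtPrime P) P π).1 h2
    exact h3 (Ideal.mem_span_singleton_self π)
  · intro T hT hwT
    rw [eq_top_iff]
    intro r _
    obtain ⟨c, hc, hint⟩ := (Algebra.IsAlgebraic.isAlgebraic (R := A) r).exists_integral_multiple
    obtain ⟨n, d, hd, rfl⟩ := WfDvdMonoid.max_power_factor hc hπ.irreducible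
    have hmem : algebraMap R K ((π ^ n * d) • r) ∈ V := by
      obtain ⟨p, hp, hp0⟩ := hint
      let gV : A →+* V := g.codRestrict V.toSubring hgV
      have : IsIntegral V (algebraMap R K ((π ^ n * d) • r)) := by
        refine ⟨p.map gV, hp.map _, ?_⟩
        rw [Polynomial.eval₂_map]
        have := congrArg (algebraMap R K) hp0
        rw [Polynomial.hom_eval₂, map_zero] at this
        exact this
      obtain ⟨y, hy⟩ := IsIntegrallyClosed.isIntegral_iff.1 this
      rw [← hy]
      exact y.2
    have hd0 : g d ≠ 0 := by
      rw [Ne, map_eq_zero_iff g hg]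
      rintro rfl
      exact hd (dvd_zero _)
    have h4 : algebraMap A R π ^ n * r ∈ T := by
      apply hT
      change algebraMap R K _ ∈ V
      have := V.mul_mem _ _ hmem (hnd d hd)
      convert this using 1
      rw [eq_mul_inv_iff_mul_eq₀ hd0, Algebra.smul_def]
      simp only [map_mul, map_pow, g, RingHom.comp_apply]
      ring
    have h5 := T.mul_mem (T.pow_mem hwT n) h4
    have h6 : w ^ n * (algebraMap A R π ^ n * r) = r := by
      rw [← mul_assoc, ← mul_pow, mul_comm w, hw, one_pow, one_mul]
    rwa [h6] at h5

theorem submax_of_base {B R : Type*} [CommRing B] [IsDomain B] [UniqueFactorizationMonoid B]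
    [Finite Bˣ] [CommRing R] [IsDomain R] [Algebra B R] [FaithfulSMul B R]
    (a : R) (ha : a ≠ 0) (hJ : ∀ y, IsUnit (a * y + 1)) : Submaximal R := by
  obtain ⟨s, hs⟩ := exists_isTranscendenceBasis B R
  have halg := hs.isAlgebraic
  let A := Algebra.adjoin B (Set.range ((↑) : s → R))
  let e : MvPolynomial s B ≃ₐ[B] A := hs.1.aevalEquiv
  have : UniqueFactorizationMonoid A :=
    e.toMulEquiv.uniqueFactorizationMonoid inferInstance
  have hfin : Finite Aˣ := by
    have h0 : Finite (MvPolynomial s B)ˣ := by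
      refine Finite.of_surjective (Units.map (MvPolynomial.C (R := B) (σ := s)).toMonoidHom) ?_
      intro u
      obtain ⟨r, hr, h⟩ := MvPolynomial.isUnit_iff_eq_C_of_isReduced.1 u.isUnit
      exact ⟨hr.unit, Units.ext h.symm⟩
    exact Finite.of_equiv _ (Units.mapEquiv e.toMulEquiv).toEquiv
  have hinj : Function.Injective (algebraMap A R) := Subtype.val_injective
  have : Algebra.IsAlgebraic A R := halg
  obtain ⟨c, hc, b, hb⟩ := (Algebra.IsAlgebraic.isAlgebraic (R := A) a).exists_nonzero_dvd
    (mem_nonZeroDivisors_of_ne_zero ha)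
  have hcu : ∀ f : A, IsUnit (algebraMap A R (c * f + 1)) := by
    intro f
    rw [map_add, map_mul, hb, map_one, mul_assoc]
    exact hJ _
  have hex : ∃ f : A, ¬ IsUnit (c * f + 1) := by
    by_contra! hall
    have : Finite A := by
      refine Finite.of_injective (fun f => (hall f).unit) ?_
      intro f f' h
      have := congrArg Units.val h
      simpa [hc] using this
    have hfield := Finite.isField_of_domain A
    obtain ⟨d, hd⟩ := hfield.mul_inv_cancel hc
    have := hcu (-d)
    rw [mul_neg, hd] at this
    simp at this
  obtain ⟨f, hf⟩ := hex
  have hne : c * f + 1 ≠ 0 := by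
    intro h
    have := hcu f
    rw [h] at this
    simp at this
  obtain ⟨π, hπ, hdvd⟩ := WfDvdMonoid.exists_irreducible_factor hf hne
  exact submax_of_prime hinj π hπ.prime (isUnit_of_dvd_unit (map_dvd _ hdvd) (hcu f))

theorem submax_domain {R : Type*} [CommRing R] [IsDomain R]
    (a : R) (ha : a ≠ 0) (hJ : ∀ y, IsUnit (a * y + 1)) : Submaximal R := by
  obtain ⟨p, hp⟩ := CharP.exists R
  rcases CharP.char_is_prime_or_zero R p with h | rfl
  · have : Fact p.Prime := ⟨h⟩
    letI : Algebra (ZMod p) R := ZMod.algebra R p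
    exact submax_of_base (B := ZMod p) a ha hJ
  · have : CharZero R := CharP.charP_to_charZero R
    exact submax_of_base (B := ℤ) a ha hJ

theorem stmt14 {R : Type*} [CommRing R] [IsReduced R]
    (hJ : Ideal.jacobson (⊥ : Ideal R) ≠ ⊥) :
    Submaximal R := by
  obtain ⟨a, haJ, ha⟩ := Submodule.exists_mem_ne_zero_of_ne_bot hJ
  have h1 : a ∉ nilradical R := by
    rw [nilradical_eq_zero]
    exact ha
  rw [nilradical_eq_sInf, Ideal.mem_sInf] at h1
  push Not at h1
  obtain ⟨P, hP, haP⟩ := h1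
  have : P.IsPrime := hP
  refine submax_of_surj (Ideal.Quotient.mk P) Ideal.Quotient.mk_surjective
    (submax_domain (Ideal.Quotient.mk P a) ?_ ?_)
  · rwa [Ne, Ideal.Quotient.eq_zero_iff_mem]
  · intro y
    obtain ⟨y, rfl⟩ := Ideal.Quotient.mk_surjective y
    have := (Ideal.mem_jacobson_bot.1 haJ y).map (Ideal.Quotient.mk P)
    simpa using this
end

section
/- Let R be a reduced commutative ring of characteristic zero which is not submaximal. Then the intersection over all prime numbers p of the ideals pR is zero. -/
namespace Stmt15Aux

open Polynomial in
theorem dvd_of_integral {A D : Type*} [CommRing A] [CommRing D] [Algebra A D]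
    [FaithfulSMul A D] {v g : A} (hv : Prime v) {z : D} (hz : IsIntegral A z)
    (h : algebraMap A D v * z = algebraMap A D g) : v ∣ g := by
  obtain ⟨f, hf, hfz⟩ := hz
  have h1 : aeval (algebraMap A D v * z) (scaleRoots f v) = 0 :=
    scaleRoots_aeval_eq_zero hfz
  rw [h, aeval_algebraMap_apply] at h1
  have h2 : aeval g (scaleRoots f v) = 0 :=
    FaithfulSMul.algebraMap_injective A D (by rw [h1, map_zero])
  rw [coe_aeval_eq_eval] at h2
  have h3 := dvd_term_of_dvd_eval_of_dvd_terms (p := v) (z := g) (f := scaleRoots f v) f.natDegree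
    (by rw [h2]; exact dvd_zero _) (by
      intro j hj
      rw [coeff_scaleRoots]
      rcases lt_or_gt_of_ne hj with hj | hj
      · exact ((dvd_pow_self v (by omega)).mul_left _).mul_right _
      · rw [coeff_eq_zero_of_natDegree_lt hj]; simp)
  rw [coeff_scaleRoots, hf.coeff_natDegree] at h3
  simp only [Nat.sub_self, pow_zero, mul_one, one_mul] at h3
  exact hv.dvd_of_dvd_pow h3

theorem submaximal_of_adjoin {R : Type*} [CommRing R] (S : Subring R) (u : R) (hu : u ∉ S)
    (hS : ∀ T : Subring R, S ≤ T → u ∈ T → T = ⊤) : Submaximal R := by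
  obtain ⟨M, hSM, hM⟩ := zorn_le_nonempty₀ {T : Subring R | S ≤ T ∧ u ∉ T} (by
    intro c hc hchain y hy
    refine ⟨sSup c, ⟨(hc hy).1.trans (le_sSup hy), ?_⟩, fun z hz => le_sSup hz⟩
    rw [Subring.mem_sSup_of_directedOn ⟨y, hy⟩ hchain.directedOn]
    rintro ⟨T, hT, huT⟩
    exact (hc hT).2 huT) S ⟨le_rfl, hu⟩
  refine ⟨M, ?_, ?_⟩
  · rintro rfl
    exact hM.prop.2 (Subring.mem_top u)
  · intro T hT
    apply hS T (hSM.trans hT.le)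
    by_contra huT
    exact hT.not_ge (hM.le_of_ge ⟨hSM.trans hT.le, huT⟩ hT.le)

/-- The subring of elements integral over `A` up to a denominator prime to `v`. -/
def locInt (A D : Type*) [CommRing A] [CommRing D] [Algebra A D] (v : A) (hv : Prime v) :
    Subring D where
  carrier := {a | ∃ g : A, ¬ v ∣ g ∧ IsIntegral A (algebraMap A D g * a)}
  zero_mem' := ⟨1, fun h => hv.not_isUnit (isUnit_of_dvd_one h), by simpa using isIntegral_zero⟩
  one_mem' := ⟨1, fun h => hv.not_isUnit (isUnit_of_dvd_one h), by simpa using isIntegral_one⟩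
  add_mem' := by
    rintro a b ⟨g, hg, hga⟩ ⟨k, hk, hkb⟩
    refine ⟨g * k, fun h => (hv.dvd_or_dvd h).elim hg hk, ?_⟩
    have := ((isIntegral_algebraMap (x := k)).mul hga).add
      ((isIntegral_algebraMap (x := g)).mul hkb)
    convert this using 1
    rw [map_mul]; ring
  mul_mem' := by
    rintro a b ⟨g, hg, hga⟩ ⟨k, hk, hkb⟩
    refine ⟨g * k, fun h => (hv.dvd_or_dvd h).elim hg hk, ?_⟩
    convert hga.mul hkb using 1
    rw [map_mul]; ring
  neg_mem' := by
    rintro a ⟨g, hg, hga⟩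
    refine ⟨g, hg, ?_⟩
    convert hga.neg using 1
    ring

theorem submaximal_of_prime {A D : Type*} [CommRing A] [IsDomain A] [WfDvdMonoid A]
    [CommRing D] [Algebra A D] [FaithfulSMul A D] [Algebra.IsAlgebraic A D]
    (v : A) (hv : Prime v) (u : D) (hu : algebraMap A D v * u = 1) : Submaximal D := by
  refine submaximal_of_adjoin (locInt A D v hv) u ?_ ?_
  · rintro ⟨g, hg, hgu⟩
    refine hg (dvd_of_integral hv hgu ?_)
    linear_combination (algebraMap A D g) * hu
  · intro T hT huT
    rw [eq_top_iff]
    intro a _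
    obtain ⟨c, hc, hca⟩ := (Algebra.IsAlgebraic.isAlgebraic (R := A) a).exists_integral_multiple
    obtain ⟨g, hg, hvg⟩ :=
      (FiniteMultiplicity.of_not_isUnit hv.not_isUnit hc).exists_eq_pow_mul_and_not_dvd
    generalize multiplicity v c = n at hg
    have h1 : algebraMap A D v ^ n * a ∈ T := by
      apply hT
      refine ⟨g, hvg, ?_⟩
      convert hca using 1
      rw [Algebra.smul_def, hg, map_mul, map_pow]; ring
    have h2 : a = u ^ n * (algebraMap A D v ^ n * a) := by
      rw [← mul_assoc, ← mul_pow, mul_comm u, hu, one_pow, one_mul]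
    rw [h2]
    exact T.mul_mem (T.pow_mem huT n) h1

theorem submaximal_of_basis {k D : Type*} [CommRing k] [IsDomain k] [UniqueFactorizationMonoid k]
    [CommRing D] [IsDomain D] [Algebra k D] (s : Set D)
    (hs : IsTranscendenceBasis k ((↑) : s → D)) (q : MvPolynomial s k) (hq : Prime q) (u : D)
    (hu : MvPolynomial.aeval ((↑) : s → D) q * u = 1) : Submaximal D := by
  have := hs.isAlgebraic
  let e := hs.1.aevalEquiv
  have : UniqueFactorizationMonoid (Algebra.adjoin k (Set.range ((↑) : s → D))) :=
    e.toMulEquiv.uniqueFactorizationMonoid inferInstance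
  refine submaximal_of_prime (e q) ((MulEquiv.prime_iff e).2 hq) u ?_
  rw [hs.1.algebraMap_aevalEquiv, hu]

theorem submaximal_of_unit_prime {D : Type*} [CommRing D] [IsDomain D] [CharZero D]
    (p : ℕ) (hp : p.Prime) (h : IsUnit (p : D)) : Submaximal D := by
  obtain ⟨s, hs⟩ := exists_isTranscendenceBasis ℤ D
  obtain ⟨u, hu⟩ := h.exists_right_inv
  refine submaximal_of_basis s hs (MvPolynomial.C (p : ℤ))
    ((MvPolynomial.prime_C_iff _).2 (Nat.prime_iff_prime_int.1 hp)) u ?_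
  simpa using hu

theorem submaximal_of_transcendental {k D : Type*} [CommRing k] [IsDomain k]
    [UniqueFactorizationMonoid k] [CommRing D] [IsDomain D] [Algebra k D] (v u : D)
    (hv : Transcendental k v) (hu : v * u = 1) : Submaximal D := by
  obtain ⟨s, hvs, hs⟩ := exists_isTranscendenceBasis_superset (R := k) (s := {v})
    ((algebraicIndependent_singleton_iff (⟨v, rfl⟩ : ({v} : Set D))).2 hv)
  refine submaximal_of_basis s hs (MvPolynomial.X ⟨v, hvs rfl⟩) MvPolynomial.X_prime u ?_
  simpa using hu

theorem submaximal_of_surjective {R S : Type*} [CommRing R] [CommRing S] (f : R →+* S)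
    (hf : Function.Surjective f) (h : Submaximal S) : Submaximal R := by
  obtain ⟨M, hM, hmax⟩ := h
  refine ⟨M.comap f, ?_, ?_⟩
  · intro h
    apply hM
    rw [eq_top_iff]
    intro x _
    obtain ⟨y, rfl⟩ := hf x
    have : y ∈ M.comap f := h ▸ Subring.mem_top y
    exact this
  · intro T hT
    have hker : f ⁻¹' {0} ⊆ (T : Set R) := by
      intro x hx
      apply hT.le
      have hx : f x = 0 := hx
      simp [Subring.mem_comap, hx]
    have h1 := Subring.comap_map_eq_self hker
    have h2 : T.map f = ⊤ := by
      apply hmax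
      refine lt_of_le_of_ne ?_ ?_
      · intro x hx
        obtain ⟨y, rfl⟩ := hf x
        exact ⟨y, hT.le hx, rfl⟩
      · rintro rfl
        rw [h1] at hT
        exact hT.ne rfl
    rw [← h1, h2, Subring.comap_top]

/-- A domain with a nonzero element in its Jacobson radical is submaximal. -/
theorem submaximal_of_jacobson {D : Type*} [CommRing D] [IsDomain D] (y : D) (hy : y ≠ 0)
    (hJ : ∀ d, IsUnit (y * d + 1)) : Submaximal D := by
  have key : ∀ (k : Type) [CommRing k] [IsDomain k] [UniqueFactorizationMonoid k] [Algebra k D],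
      Transcendental k y → Submaximal D := by
    intro k _ _ _ _ ht
    obtain ⟨u, hu⟩ := (hJ 1).exists_right_inv
    refine submaximal_of_transcendental (k := k) _ u ?_ hu
    intro halg
    apply ht
    have := halg.sub (isAlgebraic_one (R := k) (A := D))
    simpa using this
  rcases CharP.exists' D with h0 | ⟨p, hp, hc⟩
  · by_cases ht : Transcendental ℤ y
    · exact key ℤ ht
    · obtain ⟨m, hm, d, hd⟩ := (not_not.1 ht : IsAlgebraic ℤ y).exists_nonzero_dvd
        (mem_nonZeroDivisors_of_ne_zero hy)
      have hu := hJ (d * m)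
      have hsq : y * (d * m) + 1 = ((m.natAbs ^ 2 + 1 : ℕ) : D) := by
        rw [← mul_assoc, ← hd]
        have : ((m.natAbs ^ 2 : ℕ) : ℤ) = m ^ 2 := by simp
        have h3 : (((m.natAbs ^ 2 : ℕ) : ℤ) : D) = (m : D) ^ 2 := by rw [this]; push_cast; rfl
        rw [Nat.cast_add, ← Int.cast_natCast, h3]
        simp [pow_two]
      rw [hsq] at hu
      have hne : m.natAbs ^ 2 + 1 ≠ 1 := by simpa using hm
      obtain ⟨p, hp, hpd⟩ := Nat.exists_prime_and_dvd hne
      exact submaximal_of_unit_prime p hp (isUnit_of_dvd_unit (Nat.cast_dvd_cast hpd) hu)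
  · letI : Algebra (ZMod p) D := ZMod.algebra D p
    by_cases ht : Transcendental (ZMod p) y
    · exact key (ZMod p) ht
    · obtain ⟨m, hm, hd⟩ := (not_not.1 ht : IsAlgebraic (ZMod p) y).exists_nonzero_dvd
        (mem_nonZeroDivisors_of_ne_zero hy)
      obtain ⟨d, hd⟩ := (isUnit_of_dvd_unit hd
        ((isUnit_iff_ne_zero.2 hm).map (algebraMap (ZMod p) D))).exists_right_inv
      have := hJ (-d)
      rw [mul_neg, hd] at this
      simp at this

end Stmt15Aux

open Stmt15Aux in
theorem stmt15 {R : Type*} [CommRing R] [IsReduced R] [CharZero R]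
    (h : ¬ Submaximal R) :
    (⨅ p : {p : ℕ // p.Prime}, Ideal.span {((p : ℕ) : R)}) = ⊥ := by
  rw [eq_bot_iff]
  intro x hx
  rw [Ideal.mem_iInf] at hx
  have hJ : x ∈ (⊥ : Ideal R).jacobson := by
    rw [Ideal.jacobson, Ideal.mem_sInf]
    rintro M ⟨-, hM⟩
    letI : Field (R ⧸ M) := Ideal.Quotient.field M
    rcases CharP.exists' (R ⧸ M) with h0 | ⟨p, hp, hc⟩
    · exact absurd (submaximal_of_surjective (Ideal.Quotient.mk M) Ideal.Quotient.mk_surjective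
        (submaximal_of_unit_prime 2 Nat.prime_two (isUnit_iff_ne_zero.2 (by norm_num)))) h
    · have hpM : (p : R) ∈ M := by
        rw [← Ideal.Quotient.eq_zero_iff_mem, map_natCast]
        exact CharP.cast_eq_zero _ p
      exact (Ideal.span_singleton_le_iff_mem M).2 hpM (hx ⟨p, hp.out⟩)
  rw [Ideal.mem_jacobson_bot] at hJ
  by_contra hne
  have hnil : ¬ IsNilpotent x := fun hn => hne hn.eq_zero
  rw [nilpotent_iff_mem_prime] at hnil
  push Not at hnil
  obtain ⟨P, hP, hxP⟩ := hnil
  refine h (submaximal_of_surjective (Ideal.Quotient.mk P) Ideal.Quotient.mk_surjective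
    (submaximal_of_jacobson (Ideal.Quotient.mk P x) ?_ ?_))
  · rwa [Ne, Ideal.Quotient.eq_zero_iff_mem]
  · intro d
    obtain ⟨d, rfl⟩ := Ideal.Quotient.mk_surjective d
    simpa using (hJ d).map (Ideal.Quotient.mk P)
end

section
/- Let R be a semi-local commutative ring (i.e., with finitely many maximal ideals) of characteristic zero. Then R has a maximal subring. -/
/-- Key construction: a subring of `K` not containing `1/q` with `S[1/q] = K`. -/
theorem aux_ufd {A K : Type*} [CommRing A] [IsDomain A] [UniqueFactorizationMonoid A]
    [Field K] [Algebra A K] [FaithfulSMul A K] [Algebra.IsAlgebraic A K] (q : A) (hq : Prime q) :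
    ∃ S : Subring K, (algebraMap A K q)⁻¹ ∉ S ∧
      ∀ x : K, ∃ n : ℕ, (algebraMap A K q) ^ n * x ∈ S := by
  have hinj : Function.Injective (algebraMap A K) := FaithfulSMul.algebraMap_injective A K
  have hq0 : algebraMap A K q ≠ 0 := by
    rw [Ne, map_eq_zero_iff _ hinj]; exact hq.ne_zero
  let S : Subring K :=
    { carrier := {x | ∃ g : A, ¬ q ∣ g ∧ IsIntegral A (algebraMap A K g * x)}
      mul_mem' := by
        rintro a b ⟨g, hg, ha⟩ ⟨h, hh, hb⟩
        refine ⟨g * h, fun hd => (hq.dvd_or_dvd hd).elim hg hh, ?_⟩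
        have := ha.mul hb
        have e : algebraMap A K (g * h) * (a * b) =
            algebraMap A K g * a * (algebraMap A K h * b) := by rw [map_mul]; ring
        rw [e]
        exact this
      one_mem' := ⟨1, fun h => hq.not_isUnit (isUnit_of_dvd_one h), by simpa using isIntegral_one⟩
      add_mem' := by
        rintro a b ⟨g, hg, ha⟩ ⟨h, hh, hb⟩
        refine ⟨g * h, fun hd => (hq.dvd_or_dvd hd).elim hg hh, ?_⟩
        have := ((isIntegral_algebraMap (R := A) (A := K) (x := h)).mul ha).add
          ((isIntegral_algebraMap (R := A) (A := K) (x := g)).mul hb)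
        have e : algebraMap A K (g * h) * (a + b) =
            algebraMap A K h * (algebraMap A K g * a) +
              algebraMap A K g * (algebraMap A K h * b) := by rw [map_mul]; ring
        rw [e]
        exact this
      zero_mem' := ⟨1, fun h => hq.not_isUnit (isUnit_of_dvd_one h), by simpa using isIntegral_zero⟩
      neg_mem' := by
        rintro a ⟨g, hg, ha⟩
        exact ⟨g, hg, by simpa using ha.neg⟩ }
  refine ⟨S, ?_, ?_⟩
  · rintro ⟨g, hg, hi⟩
    letI : Algebra (FractionRing A) K := FractionRing.liftAlgebra A K
    haveI : IsScalarTower A (FractionRing A) K := FractionRing.isScalarTower_liftAlgebra A K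
    have e : algebraMap A K g * (algebraMap A K q)⁻¹ =
        algebraMap (FractionRing A) K
          (algebraMap A (FractionRing A) g * (algebraMap A (FractionRing A) q)⁻¹) := by
      rw [map_mul, map_inv₀, ← IsScalarTower.algebraMap_apply, ← IsScalarTower.algebraMap_apply]
    rw [e, isIntegral_algebraMap_iff (algebraMap (FractionRing A) K).injective] at hi
    obtain ⟨y, hy⟩ := IsIntegrallyClosed.isIntegral_iff.1 hi
    apply hg
    refine ⟨y, hinj ?_⟩
    rw [map_mul, IsScalarTower.algebraMap_apply A (FractionRing A) K y, hy, ← e]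
    field_simp
  · intro x
    obtain ⟨a, ha, hi⟩ := (Algebra.IsAlgebraic.isAlgebraic (R := A) x).exists_integral_multiple
    obtain ⟨c, hc, hd⟩ :=
      (FiniteMultiplicity.of_prime_left hq ha).exists_eq_pow_mul_and_not_dvd
    generalize multiplicity q a = n at hc
    refine ⟨n, c, hd, ?_⟩
    rw [Algebra.smul_def, hc, map_mul, map_pow] at hi
    convert hi using 1
    ring

theorem aux_field {K : Type*} [Field K] [CharZero K] (q : ℕ) (hq : q.Prime) :
    ∃ S : Subring K, (q : K)⁻¹ ∉ S ∧ ∀ x : K, ∃ n : ℕ, (q : K) ^ n * x ∈ S := by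
  obtain ⟨ι, x, hx⟩ := exists_isTranscendenceBasis' ℤ K
  have e := hx.1.aevalEquiv
  haveI : UniqueFactorizationMonoid (Algebra.adjoin ℤ (Set.range x)) :=
    e.toMulEquiv.uniqueFactorizationMonoid inferInstance
  haveI : Algebra.IsAlgebraic (Algebra.adjoin ℤ (Set.range x)) K := hx.isAlgebraic
  have hp : Prime (q : MvPolynomial ι ℤ) := by
    have := (MvPolynomial.prime_C_iff (σ := ι) (r := (q : ℤ))).2 (Nat.prime_iff_prime_int.1 hq)
    simpa using this
  have hp' : Prime (q : Algebra.adjoin ℤ (Set.range x)) := by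
    have := (MulEquiv.prime_iff e.toMulEquiv).2 hp
    simpa using this
  simpa using aux_ufd (K := K) (q : Algebra.adjoin ℤ (Set.range x)) hp'

theorem aux_prime {R : Type*} [CommRing R] (hsl : {M : Ideal R | M.IsMaximal}.Finite) :
    ∃ q : ℕ, q.Prime ∧ IsUnit (q : R) := by
  by_contra! h
  have h2 : ∀ q : Nat.Primes, ∃ M : Ideal R, M.IsMaximal ∧ ((q : ℕ) : R) ∈ M := fun q =>
    let ⟨M, hM, hm⟩ := exists_max_ideal_of_mem_nonunits (h q q.2)
    ⟨M, hM, hm⟩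
  choose f hf hm using h2
  haveI := hsl.to_subtype
  obtain ⟨p, q, hne, he⟩ := Finite.exists_ne_map_eq_of_infinite
    (fun q : Nat.Primes => (⟨f q, hf q⟩ : {M : Ideal R | M.IsMaximal}))
  have he' : f p = f q := congrArg Subtype.val he
  have hc : IsCoprime ((p : ℕ) : ℤ) ((q : ℕ) : ℤ) :=
    Nat.isCoprime_iff_coprime.2 ((Nat.coprime_primes p.2 q.2).2 fun h => hne (Subtype.ext h))
  obtain ⟨a, b, hab⟩ := hc
  apply (hf q).ne_top
  rw [Ideal.eq_top_iff_one]
  have h1 : (a : R) * ((p : ℕ) : R) + (b : R) * ((q : ℕ) : R) = 1 := by exact_mod_cast congrArg (Int.cast : ℤ → R) hab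
  rw [← h1]
  exact Ideal.add_mem _ (Ideal.mul_mem_left _ _ (he' ▸ hm p)) (Ideal.mul_mem_left _ _ (hm q))

theorem aux_hom (R : Type*) [CommRing R] [CharZero R] :
    ∃ P : Ideal R, ∃ _ : P.IsPrime, CharZero (FractionRing (R ⧸ P)) := by
  let T : Submonoid R := (nonZeroDivisors ℕ).map (Nat.castRingHom R)
  obtain ⟨P, hP, -, hd⟩ := Ideal.exists_le_prime_disjoint (⊥ : Ideal R) T (by
    rw [Set.disjoint_left]
    rintro x hx ⟨n, hn, rfl⟩
    have : (n : R) = 0 := by simpa using hx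
    exact nonZeroDivisors.ne_zero hn (Nat.cast_eq_zero.1 this))
  refine ⟨P, hP, ?_⟩
  apply charZero_of_inj_zero
  intro n hn
  by_contra hn0
  have h1 : algebraMap (R ⧸ P) (FractionRing (R ⧸ P)) (n : R ⧸ P) = 0 := by simpa using hn
  rw [map_eq_zero_iff _ (IsFractionRing.injective _ _)] at h1
  have h2 : Ideal.Quotient.mk P (n : R) = 0 := by simpa using h1
  rw [Ideal.Quotient.eq_zero_iff_mem] at h2
  exact Set.disjoint_left.1 hd h2 ⟨n, mem_nonZeroDivisors_of_ne_zero hn0, rfl⟩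

theorem stmt16 {R : Type*} [CommRing R] [CharZero R]
    (hsl : {M : Ideal R | M.IsMaximal}.Finite) :
    Submaximal R := by
  obtain ⟨q, hq, hu⟩ := aux_prime hsl
  obtain ⟨u, hqu⟩ := hu.exists_right_inv
  obtain ⟨P, hP, hc⟩ := aux_hom R
  obtain ⟨S, hS, hS'⟩ := aux_field (K := FractionRing (R ⧸ P)) q hq
  let f : R →+* FractionRing (R ⧸ P) := (algebraMap (R ⧸ P) _).comp (Ideal.Quotient.mk P)
  have hfu : f u = (q : FractionRing (R ⧸ P))⁻¹ := by
    apply eq_inv_of_mul_eq_one_right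
    rw [← map_natCast f, ← map_mul, hqu, map_one]
  obtain ⟨T, hST, hT⟩ := zorn_le_nonempty₀ {T : Subring R | u ∉ T} (by
    intro c hc hchain y hy
    refine ⟨sSup c, ?_, fun z hz => le_sSup hz⟩
    intro hu
    obtain ⟨t, ht, hut⟩ := (Subring.mem_sSup_of_directedOn ⟨y, hy⟩ hchain.directedOn).1 hu
    exact hc ht hut) (S.comap f) (by
      intro h
      rw [Subring.mem_comap, hfu] at h
      exact hS h)
  refine ⟨T, ?_, ?_⟩
  · rintro rfl
    exact hT.1 (Subring.mem_top u)
  · intro T' hTT'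
    have huT : u ∈ T' := by
      by_contra h
      exact hTT'.not_ge (hT.2 h hTT'.le)
    rw [eq_top_iff]
    intro x _
    obtain ⟨n, hn⟩ := hS' (f x)
    have h1 : (q : R) ^ n * x ∈ T' := by
      apply hTT'.le
      apply hST
      rw [Subring.mem_comap]
      simpa using hn
    have h2 := T'.mul_mem (T'.pow_mem huT n) h1
    rwa [← mul_assoc, ← mul_pow, mul_comm u, hqu, one_pow, one_mul] at h2
end

section
/- Let R₁ ⊆ R₂ be an extension of commutative rings with R₁ semi-local. Then either R₂ has a maximal subring or R₁ is zero-dimensional (every prime ideal of R₁ is maximal). -/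
/-- If `T` is generated over a proper subring by one element, it has a maximal subring. -/
theorem submaximal_of_gen {T : Type*} [CommRing T] (S : Subring T) (w : T) (hw : w ∉ S)
    (h : ∀ S' : Subring T, S ≤ S' → w ∈ S' → S' = ⊤) : Submaximal T := by
  obtain ⟨m, hSm, hm⟩ := zorn_le_nonempty₀ {S' : Subring T | S ≤ S' ∧ w ∉ S'} (by
    intro c hc hch y hy
    refine ⟨sSup c, ⟨(hc hy).1.trans (le_sSup hy), ?_⟩, fun z hz => le_sSup hz⟩
    intro hmem
    obtain ⟨s, hs, hws⟩ := (Subring.mem_sSup_of_directedOn ⟨y, hy⟩ hch.directedOn).1 hmem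
    exact (hc hs).2 hws) S ⟨le_rfl, hw⟩
  refine ⟨m, ?_, ?_⟩
  · rintro rfl
    exact hm.prop.2 trivial
  · intro T' hT'
    refine h T' (hSm.trans hT'.le) ?_
    by_contra hwT
    exact hT'.not_ge (hm.2 ⟨hSm.trans hT'.le, hwT⟩ hT'.le)

theorem submaximal_of_surj {R T : Type*} [CommRing R] [CommRing T] (f : R →+* T)
    (hf : Function.Surjective f) (h : Submaximal T) : Submaximal R := by
  obtain ⟨S, hS, hmax⟩ := h
  refine ⟨S.comap f, ?_, ?_⟩
  · intro htop
    apply hS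
    rw [eq_top_iff]
    intro y _
    obtain ⟨x, rfl⟩ := hf y
    have : x ∈ S.comap f := htop ▸ trivial
    exact this
  · intro T' hT'
    have hker : ∀ x, f x ∈ T'.map f → x ∈ T' := by
      rintro x ⟨y, hy, hyx⟩
      have : x - y ∈ S.comap f := by
        show f (x - y) ∈ S
        rw [map_sub, hyx, sub_self]; exact S.zero_mem
      have := T'.add_mem (hT'.le this) hy
      simpa using this
    have : T'.map f = ⊤ := by
      apply hmax
      refine lt_of_le_not_ge ?_ ?_
      · intro y hy
        obtain ⟨x, rfl⟩ := hf y
        exact ⟨x, hT'.le hy, rfl⟩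
      · intro hle
        exact hT'.not_ge fun x hx => hle ⟨x, hx, rfl⟩
    rw [eq_top_iff]
    intro x _
    exact hker x (this ▸ trivial)

/-- Rank one type valuation subring at a prime element of a UFD. -/
theorem exists_val {A K : Type*} [CommRing A] [IsDomain A] [UniqueFactorizationMonoid A]
    [Field K] [Algebra A K] [FaithfulSMul A K] [Algebra.IsAlgebraic A K] (u : A) (hu : Prime u) :
    ∃ V : ValuationSubring K, algebraMap A K u ∈ V ∧ (algebraMap A K u)⁻¹ ∉ V ∧
      ∀ y : K, ∃ n : ℕ, (algebraMap A K u) ^ n * y ∈ V := by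
  have hinj := FaithfulSMul.algebraMap_injective A K
  have hP : (Ideal.span {u}).IsPrime := (Ideal.span_singleton_prime hu.ne_zero).2 hu
  have hunit : ∀ y : (Ideal.span {u}).primeCompl, IsUnit (algebraMap A K y) := by
    rintro ⟨y, hy⟩
    rw [isUnit_iff_ne_zero]
    intro h0
    have : y = 0 := hinj (by simpa using h0)
    subst this
    exact hy (Ideal.zero_mem _)
  let L := Localization.AtPrime (Ideal.span {u})
  let f : L →+* K := IsLocalization.lift (M := (Ideal.span {u}).primeCompl) hunit
  have hf : ∀ a : A, f (algebraMap A L a) = algebraMap A K a := fun a => IsLocalization.lift_eq _ a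
  obtain ⟨V, hV, hloc⟩ := IsLocalRing.exists_factor_valuationRing f
  have hAV : ∀ a : A, algebraMap A K a ∈ V := fun a => hf a ▸ hV (algebraMap A L a)
  have hu0 : algebraMap A K u ≠ 0 := fun h => hu.ne_zero (hinj (by simpa using h))
  refine ⟨V, hAV u, ?_, ?_⟩
  · intro hmem
    have h1 : IsUnit (f.codRestrict V.toSubring hV (algebraMap A L u)) := by
      refine IsUnit.of_mul_eq_one ⟨_, hmem⟩ ?_
      apply Subtype.ext
      show f (algebraMap A L u) * (algebraMap A K u)⁻¹ = 1
      rw [hf, mul_inv_cancel₀ hu0]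
    have h2 := hloc.map_nonunit _ h1
    rw [IsLocalization.AtPrime.isUnit_to_map_iff L (Ideal.span {u})] at h2
    exact h2 (Ideal.mem_span_singleton_self u)
  · intro y
    obtain ⟨a, ha, hint⟩ := (Algebra.IsAlgebraic.isAlgebraic (R := A) y).exists_integral_multiple
    obtain ⟨n, g, hg, rfl⟩ := WfDvdMonoid.max_power_factor ha hu.irreducible
    have hgc : g ∈ (Ideal.span {u}).primeCompl := fun h => hg (Ideal.mem_span_singleton.1 h)
    have hg0 : algebraMap A K g ≠ 0 := (hunit ⟨g, hgc⟩).ne_zero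
    have hginv : (algebraMap A K g)⁻¹ ∈ V := by
      have : f (IsLocalization.mk' L 1 ⟨g, hgc⟩) = (algebraMap A K g)⁻¹ := by
        apply eq_inv_of_mul_eq_one_left
        rw [← hf g, ← map_mul]
        have := IsLocalization.mk'_spec L (1 : A) (⟨g, hgc⟩ : (Ideal.span {u}).primeCompl)
        simp only at this
        rw [this, map_one, map_one]
      exact this ▸ hV _
    have hmem : (u ^ n * g) • y ∈ V := by
      let φ : A →+* V := (algebraMap A K).codRestrict V.toSubring hAV
      have : IsIntegral V ((u ^ n * g) • y) := by
        obtain ⟨p, hp, hp0⟩ := hint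
        refine ⟨p.map φ, hp.map φ, ?_⟩
        rw [Polynomial.eval₂_map]
        exact hp0
      obtain ⟨z, hz⟩ := IsIntegrallyClosed.isIntegral_iff.1 this
      rw [← hz]; exact z.2
    refine ⟨n, ?_⟩
    have := V.mul_mem _ _ hginv hmem
    rw [Algebra.smul_def, map_mul, map_pow] at this
    convert this using 1
    field_simp

theorem submaximal_of_prime {A T : Type*} [CommRing A] [IsDomain A] [UniqueFactorizationMonoid A]
    [CommRing T] [IsDomain T] [Algebra A (FractionRing T)] [FaithfulSMul A (FractionRing T)]
    [Algebra.IsAlgebraic A (FractionRing T)] (u : A) (hu : Prime u) (v : T) (hv : IsUnit v)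
    (huv : algebraMap A (FractionRing T) u = algebraMap T (FractionRing T) v) :
    Submaximal T := by
  obtain ⟨V, h1, h2, h3⟩ := exists_val (K := FractionRing T) u hu
  obtain ⟨v, rfl⟩ := hv
  rw [huv] at h1 h2 h3
  refine submaximal_of_gen (V.toSubring.comap (algebraMap T (FractionRing T))) (↑v⁻¹ : T) ?_ ?_
  · intro hmem
    apply h2
    have : algebraMap T (FractionRing T) (↑v⁻¹ : T) ∈ V := hmem
    rwa [map_units_inv] at this
  · intro S' hle hv'
    rw [eq_top_iff]
    intro t _
    obtain ⟨n, hn⟩ := h3 (algebraMap T _ t)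
    rw [← map_pow, ← map_mul] at hn
    have := S'.mul_mem (S'.pow_mem hv' n) (hle (show (v : T) ^ n * t ∈ _ from hn))
    rwa [← mul_assoc, ← mul_pow, Units.inv_mul, one_pow, one_mul] at this

theorem submaximal_of_basis {k T ι : Type*} [CommRing k] [IsDomain k] [UniqueFactorizationMonoid k]
    [CommRing T] [IsDomain T] [Algebra k (FractionRing T)] (s : ι → FractionRing T)
    (hs : IsTranscendenceBasis k s) (u : MvPolynomial ι k) (hu : Prime u) (v : T) (hv : IsUnit v)
    (huv : MvPolynomial.aeval s u = algebraMap T (FractionRing T) v) :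
    Submaximal T := by
  let e := hs.1.aevalEquiv
  have : UniqueFactorizationMonoid (Algebra.adjoin k (Set.range s)) :=
    e.toMulEquiv.uniqueFactorizationMonoid inferInstance
  have := hs.isAlgebraic
  exact submaximal_of_prime (A := Algebra.adjoin k (Set.range s)) (e u)
    ((MulEquiv.prime_iff e.toMulEquiv).2 hu) v hv huv

theorem submaximal_of_transcendental_s17 {k T : Type*} [CommRing k] [IsDomain k]
    [UniqueFactorizationMonoid k] [CommRing T] [IsDomain T] [Algebra k T]
    (v : T) (hv : IsUnit v) (ht : Transcendental k v) : Submaximal T := by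
  have ht' : Transcendental k (algebraMap T (FractionRing T) v) :=
    (transcendental_algebraMap_iff (IsFractionRing.injective T (FractionRing T))).2 ht
  obtain ⟨t, hst, hb⟩ := exists_isTranscendenceBasis_superset (R := k)
    (s := {algebraMap T (FractionRing T) v})
    ((algebraicIndependent_singleton_iff
      (⟨_, rfl⟩ : ({algebraMap T (FractionRing T) v} : Set (FractionRing T)))).2 ht')
  exact submaximal_of_basis _ hb (MvPolynomial.X ⟨_, hst rfl⟩) MvPolynomial.X_prime v hv
    (by simp)

theorem submaximal_of_nat {T : Type*} [CommRing T] [IsDomain T] [CharZero T]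
    (q : ℕ) (hq : q.Prime) (hv : IsUnit (q : T)) : Submaximal T := by
  have : CharZero (FractionRing T) :=
    charZero_of_injective_algebraMap (IsFractionRing.injective T (FractionRing T))
  obtain ⟨t, hb⟩ := exists_isTranscendenceBasis ℤ (FractionRing T)
  exact submaximal_of_basis _ hb (MvPolynomial.C (q : ℤ))
    ((MvPolynomial.prime_C_iff _).2 (Nat.prime_iff_prime_int.1 hq)) (q : T) hv (by simp)

theorem submaximal_of_jacobson {D T : Type*} [CommRing D] [CommRing T] [IsDomain T]
    (f : D →+* T) (hf : Function.Injective f) (x : D) (hx0 : x ≠ 0) (hxu : ¬ IsUnit x)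
    (hx : ∀ y, IsUnit (x * y + 1)) : Submaximal T := by
  have : IsDomain D := hf.isDomain f
  have key : ∀ (k : Type) [CommRing k] [IsDomain k] [UniqueFactorizationMonoid k]
      [Algebra k D] [Algebra k T], (∀ a, f (algebraMap k D a) = algebraMap k T a) →
      Submaximal T ∨ ∃ r : k, r ≠ 0 ∧ x ∣ algebraMap k D r := by
    intro k _ _ _ _ _ hk
    let g : D →ₐ[k] T := { f with commutes' := hk }
    by_cases ht : IsAlgebraic k x
    · exact Or.inr (ht.exists_nonzero_dvd (mem_nonZeroDivisors_of_ne_zero hx0))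
    · left
      have hux : IsUnit (f (x + 1)) := by simpa using (hx 1).map f
      refine submaximal_of_transcendental_s17 (k := k) _ hux ?_
      intro halg
      have h1 : IsAlgebraic k (x + 1) := (isAlgebraic_algHom_iff g hf).1 halg
      exact ht (by simpa using h1.sub isAlgebraic_one)
  obtain ⟨p, hp⟩ := CharP.exists T
  have hpD : CharP D p := (f.charP_iff hf p).2 hp
  rcases CharP.char_is_prime_or_zero T p with hprime | rfl
  · have : Fact p.Prime := ⟨hprime⟩
    let := ZMod.algebra D p
    let := ZMod.algebra T p
    rcases key (ZMod p) (fun a => by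
      rw [← RingHom.comp_apply]; congr 1; exact Subsingleton.elim _ _) with h | ⟨r, hr, hd⟩
    · exact h
    · exact absurd (isUnit_of_dvd_unit hd ((isUnit_iff_ne_zero.2 hr).map _)) hxu
  · have : CharZero T := CharP.charP_to_charZero T
    rcases key ℤ (fun a => by simp) with h | ⟨r, hr, d, hd⟩
    · exact h
    · have hu : IsUnit ((r.natAbs + 1 : ℕ) : D) := by
        rcases Int.natAbs_eq r with h | h
        · have := hx d
          rw [← hd, h] at this
          simpa using this
        · have := hx (-d)
          rw [mul_neg, ← hd, h] at this
          simpa using this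
      obtain ⟨q, hq, hqd⟩ := Nat.exists_prime_and_dvd (n := r.natAbs + 1)
        (by have := Int.natAbs_pos.2 hr; omega)
      have hqu : IsUnit (q : D) := isUnit_of_dvd_unit (Nat.cast_dvd_cast hqd) hu
      exact submaximal_of_nat q hq (by simpa using hqu.map f)

theorem stmt17 {R₂ : Type*} [CommRing R₂] [Nontrivial R₂] (R₁ : Subring R₂)
    (hsl : {M : Ideal R₁ | M.IsMaximal}.Finite) :
    Submaximal R₂ ∨ ∀ P : Ideal R₁, P.IsPrime → P.IsMaximal := by
  by_cases hall : ∀ P : Ideal R₁, P.IsPrime → P.IsMaximal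
  · exact Or.inr hall
  left
  push Not at hall
  obtain ⟨P, hP, hPm⟩ := hall
  obtain ⟨Q, hQ, hQP⟩ := Ideal.exists_minimalPrimes_le (I := ⊥) (J := P) bot_le
  have hQp : Q.IsPrime := hQ.1.1
  have hQm : ¬ Q.IsMaximal := fun h => hPm (h.eq_of_le hP.ne_top hQP ▸ h)
  obtain ⟨P', hP', hcomap⟩ := Ideal.exists_comap_eq_of_mem_minimalPrimes_of_injective
    (f := R₁.subtype) Subtype.val_injective Q hQ
  have hnle : ¬ hsl.toFinset.inf id ≤ Q := by
    rw [hQp.inf_le']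
    rintro ⟨M, hM, hMQ⟩
    have hM' : M.IsMaximal := by simpa using hM
    exact hQm (hM'.eq_of_le hQp.ne_top hMQ ▸ hM')
  obtain ⟨x, hx, hxQ⟩ := SetLike.not_le_iff_exists.1 hnle
  have hxM : ∀ M : Ideal R₁, M.IsMaximal → x ∈ M := fun M hM =>
    (Finset.inf_le (f := id) (by simpa using hM) : hsl.toFinset.inf id ≤ M) hx
  refine submaximal_of_surj (Ideal.Quotient.mk P') Ideal.Quotient.mk_surjective ?_
  refine submaximal_of_jacobson (Ideal.quotientMap P' R₁.subtype hcomap.ge)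
    (Ideal.quotientMap_injective' hcomap.le) (Ideal.Quotient.mk Q x) ?_ ?_ ?_
  · rwa [Ne, Ideal.Quotient.eq_zero_iff_mem]
  · intro hu
    obtain ⟨M, hM, hQM⟩ := Ideal.exists_le_maximal Q hQp.ne_top
    have hz := hu.map (Ideal.Quotient.factor hQM)
    rw [Ideal.Quotient.factor_mk, Ideal.Quotient.eq_zero_iff_mem.2 (hxM M hM)] at hz
    have : Nontrivial (R₁ ⧸ M) := Ideal.Quotient.nontrivial_iff.2 hM.ne_top
    exact not_isUnit_zero hz
  · intro y
    obtain ⟨y, rfl⟩ := Ideal.Quotient.mk_surjective y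
    have : x ∈ Ideal.jacobson (⊥ : Ideal R₁) := by
      rw [Ideal.jacobson, Submodule.mem_sInf]
      exact fun M hM => hxM M hM.2
    have := (Ideal.mem_jacobson_bot.1 this y).map (Ideal.Quotient.mk Q)
    simpa using this
end
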